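/- Let F be a C² strict MTP₂ cdf on (0,∞)ⁿ with everywhere positive density f, split as above with marginals F₁, F₂ and r(x) = F(x)/(F₁(x₁)F₂(x₂)). Then for every integer m ≥ 2 and all x ∈ (0,∞)ⁿ, F^{m*}(x) > (r(x))^m F₁^{m*}(x₁) F₂^{m*}(x₂). -/

import Mathlib

open MeasureTheory Filter Set

/-- Update one coordinate of a point of `(0,∞)^k × (0,∞)^l`, coordinates
indexed by `Fin k ⊕ Fin l`. -/
def updCoord {k l : ℕ} (x : (Fin k → ℝ) × (Fin l → ℝ)) :
    Fin k ⊕ Fin l → ℝ → (Fin k → ℝ) × (Fin l → ℝ)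
  | Sum.inl i, t => (Function.update x.1 i t, x.2)
  | Sum.inr j, t => (x.1, Function.update x.2 j t)

/-- The value of one coordinate. -/
def coordVal {k l : ℕ} (x : (Fin k → ℝ) × (Fin l → ℝ)) : Fin k ⊕ Fin l → ℝ
  | Sum.inl i => x.1 i
  | Sum.inr j => x.2 j

/-!
Let `μ` be the law with cdf `F`, and `μ₁`, `μ₂` its marginals. Since `r` is decreasing, the measure
`r(x) • (μ₁ ⊗ μ₂)` has a smaller cdf than `μ` at every point below `x`. As the measures live on
nonnegative vectors, convolution at a point below `x` only sees points below `x`, so this domination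
survives convolution; the `m`-fold convolution of `r(x) • (μ₁ ⊗ μ₂)` is
`r(x) ^ m • (μ₁^{m*} ⊗ μ₂^{m*})`, which gives the weak inequality. For strictness, `r` is not
constant below `x`, for otherwise `log F` would be a function of `x₁` plus a function of `x₂` there
and its mixed derivatives would vanish. So `r(w) > r(x)` for some `w ≤ x`, and the
larger constant `r(w)` is available whenever the last summand `y` satisfies `x - y ≤ w`, an event
of positive probability.
-/

open scoped ENNReal

section Preorder

variable {E : Type*} [Preorder E] [MeasurableSpace E] {P : Set E} {μ ν : Measure E} {w x : E}

lemma measure_Iic_eq_zero_of_notMem (hP : IsUpperSet P) (hμ : ∀ᵐ y ∂μ, y ∈ P)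
    (hw : w ∉ P) : μ (Iic w) = 0 :=
  measure_mono_null (fun _ hyw hyP => hw (hP hyw hyP)) hμ

/-- `CdfLEBelow x ν μ`: the cumulative distribution function of `ν` is bounded by that of `μ` at
every point below `x`. -/
def CdfLEBelow (x : E) (ν μ : Measure E) : Prop :=
  ∀ w ≤ x, ν (Iic w) ≤ μ (Iic w)

/-- The ratio of the cumulative distribution functions of `μ` and `ν`; it is `0` wherever that
of `ν` vanishes. -/
noncomputable def cdfRatio (μ ν : Measure E) (x : E) : ℝ :=
  μ.real (Iic x) / ν.real (Iic x)

lemma cdfLEBelow_of_antitoneOn_cdfRatio [IsFiniteMeasure μ] [IsFiniteMeasure ν]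
    (hP : IsUpperSet P) (hν : ∀ᵐ y ∂ν, y ∈ P) (hr : AntitoneOn (cdfRatio μ ν) P) (hx : x ∈ P) :
    CdfLEBelow x (ENNReal.ofReal (cdfRatio μ ν x) • ν) μ := by
  intro w hw
  rw [Measure.smul_apply, smul_eq_mul]
  by_cases hw0 : ν (Iic w) = 0
  · simp [hw0]
  have hwP : w ∈ P := by_contra fun h => hw0 (measure_Iic_eq_zero_of_notMem hP hν h)
  have hpos : 0 < ν.real (Iic w) := ENNReal.toReal_pos hw0 (measure_ne_top _ _)
  calc ENNReal.ofReal (cdfRatio μ ν x) * ν (Iic w)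
      = ENNReal.ofReal (cdfRatio μ ν x * ν.real (Iic w)) := by
        rw [ENNReal.ofReal_mul' hpos.le, ofReal_measureReal]
    _ ≤ ENNReal.ofReal (μ.real (Iic w)) :=
        ENNReal.ofReal_le_ofReal ((le_div_iff₀ hpos).1 (hr hwP hx hw))
    _ = μ (Iic w) := ofReal_measureReal

variable {E₁ E₂ : Type*} [Preorder E₁] [Preorder E₂] [MeasurableSpace E₁] [MeasurableSpace E₂]

lemma measure_fst_prod_snd_Iic_ne_zero {μ : Measure (E₁ × E₂)} [SFinite μ] {x : E₁ × E₂}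
    (h₁ : MeasurableSet (Iic x.1)) (h₂ : MeasurableSet (Iic x.2)) (hx : μ (Iic x) ≠ 0) :
    μ.fst.prod μ.snd (Iic x) ≠ 0 := by
  rw [Iic_prod_eq, Measure.prod_prod, Measure.fst_apply h₁, Measure.snd_apply h₂]
  exact mul_ne_zero (ne_bot_of_le_ne_bot hx (measure_mono fun _ hy => hy.1))
    (ne_bot_of_le_ne_bot hx (measure_mono fun _ hy => hy.2))

lemma cdfRatio_fst_prod_snd_le_one_of_subsingleton_fst [Subsingleton E₁] {μ : Measure (E₁ × E₂)}
    [IsProbabilityMeasure μ] {x : E₁ × E₂} (h₂ : MeasurableSet (Iic x.2)) :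
    cdfRatio μ (μ.fst.prod μ.snd) x ≤ 1 := by
  have hx₁ : Iic x.1 = univ := eq_univ_of_forall fun y => (Subsingleton.elim y x.1).le
  have hx : Prod.snd ⁻¹' Iic x.2 = Iic x := by rw [Iic_prod_eq, hx₁, univ_prod]
  rw [cdfRatio, ← hx, measureReal_def, ← Measure.snd_apply h₂, ← measureReal_def, hx, Iic_prod_eq,
    measureReal_prod_prod, hx₁, probReal_univ, one_mul]
  exact div_self_le_one _

lemma cdfRatio_fst_prod_snd_le_one_of_subsingleton_snd [Subsingleton E₂] {μ : Measure (E₁ × E₂)}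
    [IsProbabilityMeasure μ] {x : E₁ × E₂} (h₁ : MeasurableSet (Iic x.1)) :
    cdfRatio μ (μ.fst.prod μ.snd) x ≤ 1 := by
  have hx₂ : Iic x.2 = univ := eq_univ_of_forall fun y => (Subsingleton.elim y x.2).le
  have hx : Prod.fst ⁻¹' Iic x.1 = Iic x := by rw [Iic_prod_eq, hx₂, prod_univ]
  rw [cdfRatio, ← hx, measureReal_def, ← Measure.fst_apply h₁, ← measureReal_def, hx, Iic_prod_eq,
    measureReal_prod_prod, hx₂, probReal_univ, mul_one]
  exact div_self_le_one _

end Preorder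

section Convolution

variable {E : Type*} [AddCommGroup E] [MeasurableSpace E] {μ ν : Measure E}

/-- The `m`-fold convolution power of a measure on an additive group; the zeroth power is the
unit mass at `0`. -/
noncomputable def convPow (μ : Measure E) : ℕ → Measure E
  | 0 => Measure.dirac 0
  | m + 1 => convPow μ m ∗ μ

instance convPow.instIsFiniteMeasure [IsFiniteMeasure μ] (m : ℕ) :
    IsFiniteMeasure (convPow μ m) := by
  induction m <;> (rw [convPow]; infer_instance)

instance convPow.instSFinite [SFinite μ] (m : ℕ) : SFinite (convPow μ m) := by
  induction m <;> (rw [convPow]; infer_instance)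

lemma convPow_one [MeasurableAdd₂ E] [SFinite μ] : convPow μ 1 = μ :=
  Measure.dirac_zero_conv μ

lemma convPow_smul [MeasurableAdd₂ E] [SFinite μ] (c : ℝ≥0∞) (m : ℕ) :
    convPow (c • μ) m = c ^ m • convPow μ m := by
  induction m with
  | zero => simp [convPow]
  | succ m ih =>
    rw [convPow, ih, Measure.conv_smul_left, Measure.conv_smul_right, smul_smul, ← pow_succ,
      ← convPow]

variable {E₁ E₂ : Type*} [AddCommGroup E₁] [MeasurableSpace E₁] [MeasurableAdd₂ E₁]
  [AddCommGroup E₂] [MeasurableSpace E₂] [MeasurableAdd₂ E₂]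

lemma prod_conv_prod [MeasurableAdd₂ (E₁ × E₂)] (α α' : Measure E₁) (β β' : Measure E₂)
    [SFinite α'] [SFinite β] [SFinite β'] :
    α.prod β ∗ α'.prod β' = (α ∗ α').prod (β ∗ β') := by
  refine Measure.ext_of_lintegral _ fun f hf => ?_
  have hadd : Measurable fun p : (E₁ × E₂) × E₁ × E₂ => f (p.1 + p.2) := by fun_prop
  rw [Measure.lintegral_conv hf, lintegral_prod _ hadd.lintegral_prod_right'.aemeasurable,
    lintegral_prod _ hf.aemeasurable, Measure.lintegral_conv hf.lintegral_prod_right']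
  refine lintegral_congr fun a => ?_
  calc ∫⁻ b, ∫⁻ q, f ((a, b) + q) ∂α'.prod β' ∂β
      = ∫⁻ b, ∫⁻ a', ∫⁻ b', f (a + a', b + b') ∂β' ∂α' ∂β :=
        lintegral_congr fun b => lintegral_prod _ (by fun_prop)
    _ = ∫⁻ a', ∫⁻ b, ∫⁻ b', f (a + a', b + b') ∂β' ∂β ∂α' :=
        lintegral_lintegral_swap (by fun_prop)
    _ = ∫⁻ a', ∫⁻ v, f (a + a', v) ∂(β ∗ β') ∂α' :=
        lintegral_congr fun a' =>
          (Measure.lintegral_conv (f := fun v => f (a + a', v)) (by fun_prop)).symm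

lemma convPow_prod [MeasurableAdd₂ (E₁ × E₂)]
    (α : Measure E₁) (β : Measure E₂) [SFinite α] [SFinite β] (m : ℕ) :
    convPow (α.prod β) m = (convPow α m).prod (convPow β m) := by
  induction m with
  | zero => exact Measure.dirac_prod_dirac.symm
  | succ m ih => rw [convPow, ih, prod_conv_prod, ← convPow, ← convPow]

end Convolution

section OrderedGroup

variable {E : Type*} [AddCommGroup E] [PartialOrder E] [IsOrderedAddMonoid E]
  [TopologicalSpace E] [OrderClosedTopology E] [MeasurableSpace E] [OpensMeasurableSpace E]
  [MeasurableAdd₂ E] {μ ν μ₁ μ₂ ν₁ ν₂ ρ : Measure E}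

lemma measurable_measure_Iic_sub (μ : Measure E) [SFinite μ] (x : E) :
    Measurable fun y => μ (Iic (x - y)) := by
  simp_rw [← preimage_add_const_Iic]
  exact measurable_measure_prodMk_right (measurable_add (measurableSet_Iic (a := x)))

lemma conv_Iic (μ ν : Measure E) [SFinite μ] [SFinite ν] (x : E) :
    (μ ∗ ν) (Iic x) = ∫⁻ y, μ (Iic (x - y)) ∂ν := by
  rw [Measure.conv, Measure.map_apply measurable_add measurableSet_Iic,
    Measure.prod_apply_symm (measurable_add measurableSet_Iic)]
  exact lintegral_congr fun y => congrArg μ (preimage_add_const_Iic y x)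

lemma mul_measure_Iic_le_conv (μ ν : Measure E) [SFinite ν] (x y : E) :
    μ (Iic x) * ν (Iic y) ≤ (μ ∗ ν) (Iic (x + y)) := by
  rw [Measure.conv, Measure.map_apply measurable_add measurableSet_Iic, ← Measure.prod_prod]
  exact measure_mono fun p hp => add_le_add hp.1 hp.2

lemma pow_measure_Iic_le_convPow (μ : Measure E) [SFinite μ] (w : E) (m : ℕ) :
    μ (Iic w) ^ m ≤ convPow μ m (Iic (m • w)) := by
  induction m with
  | zero => simp [convPow, Measure.dirac_apply' _ measurableSet_Iic]
  | succ m ih =>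
    calc μ (Iic w) ^ (m + 1) ≤ convPow μ m (Iic (m • w)) * μ (Iic w) := by
          rw [pow_succ]; gcongr
      _ ≤ convPow μ (m + 1) (Iic ((m + 1) • w)) := by
          rw [succ_nsmul]; exact mul_measure_Iic_le_conv _ _ _ _

lemma ae_nonneg_conv [SFinite μ] [SFinite ν] (hμ : ∀ᵐ y ∂μ, 0 ≤ y) (hν : ∀ᵐ y ∂ν, 0 ≤ y) :
    ∀ᵐ y ∂(μ ∗ ν), 0 ≤ y := by
  refine (ae_map_iff measurable_add.aemeasurable measurableSet_Ici).2 ?_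
  filter_upwards [Measure.quasiMeasurePreserving_fst.ae hμ,
    Measure.quasiMeasurePreserving_snd.ae hν] with p hp₁ hp₂ using add_nonneg hp₁ hp₂

lemma ae_nonneg_convPow [SFinite μ] (hμ : ∀ᵐ y ∂μ, 0 ≤ y) (m : ℕ) :
    ∀ᵐ y ∂(convPow μ m), 0 ≤ y := by
  induction m with
  | zero => exact (ae_dirac_iff measurableSet_Ici).2 le_rfl
  | succ m ih => exact ae_nonneg_conv ih hμ

namespace CdfLEBelow

variable {x : E}

lemma conv_right [SFinite μ] [SFinite ν] [SFinite ρ] (h : CdfLEBelow x ν μ)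
    (hρ : ∀ᵐ y ∂ρ, 0 ≤ y) : CdfLEBelow x (ν ∗ ρ) (μ ∗ ρ) := by
  intro w hw
  rw [conv_Iic, conv_Iic]
  exact lintegral_mono_ae (hρ.mono fun y hy => h _ ((sub_le_self w hy).trans hw))

lemma conv_left [SFinite μ] [SFinite ν] [SFinite ρ] (h : CdfLEBelow x ν μ)
    (hρ : ∀ᵐ y ∂ρ, 0 ≤ y) : CdfLEBelow x (ρ ∗ ν) (ρ ∗ μ) := by
  simpa only [Measure.conv_comm ρ] using h.conv_right hρ

lemma convPow [SFinite μ] [SFinite ν] (h : CdfLEBelow x ν μ) (hμ : ∀ᵐ y ∂μ, 0 ≤ y)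
    (hν : ∀ᵐ y ∂ν, 0 ≤ y) (m : ℕ) : CdfLEBelow x (convPow ν m) (convPow μ m) := by
  induction m with
  | zero => exact fun _ _ => le_rfl
  | succ m ih =>
    exact fun w hw => (h.conv_left (ae_nonneg_convPow hν m) w hw).trans (ih.conv_right hμ w hw)

lemma conv_Iic_lt [SFinite ν₁] [SFinite ν₂] [IsFiniteMeasure μ₁] [IsFiniteMeasure μ₂]
    (h₁ : CdfLEBelow x ν₁ μ₁) (h₂ : CdfLEBelow x ν₂ μ₂)
    (hν₁ : ∀ᵐ y ∂ν₁, 0 ≤ y) (hμ₂ : ∀ᵐ y ∂μ₂, 0 ≤ y)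
    (hlt : ∃ᵐ y ∂μ₂, ν₁ (Iic (x - y)) < μ₁ (Iic (x - y))) :
    (ν₁ ∗ ν₂) (Iic x) < (μ₁ ∗ μ₂) (Iic x) := by
  refine (h₂.conv_left hν₁ x le_rfl).trans_lt ?_
  have hfin : (ν₁ ∗ μ₂) (Iic x) ≠ ∞ :=
    ne_top_of_le_ne_top (measure_ne_top _ _) (h₁.conv_right hμ₂ x le_rfl)
  rw [conv_Iic] at hfin
  rw [conv_Iic, conv_Iic]
  exact lintegral_strict_mono_of_ae_le_of_frequently_ae_lt
    (measurable_measure_Iic_sub μ₁ x).aemeasurable hfin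
    (hμ₂.mono fun y hy => h₁ _ (sub_le_self x hy)) (hlt.mono fun _ h => h.ne)

end CdfLEBelow

-- On the points `y` with `x - y ≤ w`, the better constant `d` gives strict inequality.
lemma pow_mul_convPow_Iic_lt [IsFiniteMeasure μ] [IsFiniteMeasure ν] {c d : ℝ≥0∞} {x w : E}
    (hcd : c < d) (hc : CdfLEBelow x (c • ν) μ) (hd : CdfLEBelow w (d • ν) μ)
    (hμ : ∀ᵐ y ∂μ, 0 ≤ y) (hν : ∀ᵐ y ∂ν, 0 ≤ y) {m : ℕ} (hm : m ≠ 0)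
    (hfreq : ∃ᵐ y ∂μ, x - y ≤ w ∧ convPow ν m (Iic (x - y)) ≠ 0) :
    c ^ (m + 1) * convPow ν (m + 1) (Iic x) < convPow μ (m + 1) (Iic x) := by
  have hsmul (a : ℝ≥0∞) : ∀ᵐ y ∂(a • ν), 0 ≤ y := Measure.ae_smul_measure hν a
  have hpow (a : ℝ≥0∞) (n : ℕ) (z : E) :
      convPow (a • ν) n (Iic z) = a ^ n * convPow ν n (Iic z) := by
    rw [convPow_smul, Measure.smul_apply, smul_eq_mul]
  rw [← hpow]
  refine (hc.convPow hμ (hsmul c) m).conv_Iic_lt hc (ae_nonneg_convPow (hsmul c) m) hμ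
    (hfreq.mono fun y ⟨hyw, hy⟩ => ?_)
  calc convPow (c • ν) m (Iic (x - y)) = c ^ m * convPow ν m (Iic (x - y)) := hpow _ _ _
    _ < d ^ m * convPow ν m (Iic (x - y)) :=
        ENNReal.mul_lt_mul_left hy (measure_ne_top _ _) ((ENNReal.pow_lt_pow_left_iff hm).2 hcd)
    _ = convPow (d • ν) m (Iic (x - y)) := (hpow _ _ _).symm
    _ ≤ convPow μ m (Iic (x - y)) := hd.convPow hμ (hsmul d) m _ hyw

end OrderedGroup

section OpenUpperCone

variable {E : Type*} [AddCommGroup E] [PartialOrder E] [Module ℝ E] [TopologicalSpace E]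

/-- An open convex cone of nonnegative vectors absorbing everything above it, such as the open
positive orthant; convexity is implied by the upper-set condition. -/
structure IsOpenUpperCone (P : Set E) : Prop where
  isOpen : IsOpen P
  isUpperSet : IsUpperSet P
  nonneg : ∀ w ∈ P, 0 ≤ w
  smul_mem : ∀ c : ℝ, 0 < c → ∀ w ∈ P, c • w ∈ P

lemma IsOpenUpperCone.prod {E₁ E₂ : Type*} [AddCommGroup E₁] [PartialOrder E₁] [Module ℝ E₁]
    [TopologicalSpace E₁] [AddCommGroup E₂] [PartialOrder E₂] [Module ℝ E₂] [TopologicalSpace E₂]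
    {P₁ : Set E₁} {P₂ : Set E₂} (hP₁ : IsOpenUpperCone P₁) (hP₂ : IsOpenUpperCone P₂) :
    IsOpenUpperCone (P₁ ×ˢ P₂) where
  isOpen := hP₁.isOpen.prod hP₂.isOpen
  isUpperSet := hP₁.isUpperSet.prod hP₂.isUpperSet
  nonneg _ hw := ⟨hP₁.nonneg _ hw.1, hP₂.nonneg _ hw.2⟩
  smul_mem c hc _ hw := ⟨hP₁.smul_mem c hc _ hw.1, hP₂.smul_mem c hc _ hw.2⟩

variable [IsOrderedAddMonoid E] [MeasurableSpace E] {P : Set E} {μ ν : Measure E} {w x : E}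

lemma IsOpenUpperCone.measure_sub_le_ne_zero [IsTopologicalAddGroup E] (hP : IsOpenUpperCone P)
    (hμ : ∀ U ⊆ P, IsOpen U → U.Nonempty → μ U ≠ 0) (hw : w ∈ P) (hwx : w ≤ x) :
    μ {y | x - y ≤ w ∧ x - y ∈ P} ≠ 0 := by
  have hhalf : (2⁻¹ : ℝ) • w ∈ P := hP.smul_mem _ (by norm_num) _ hw
  have hsplit : w - (2⁻¹ : ℝ) • w = (2⁻¹ : ℝ) • w := by
    rw [sub_eq_iff_eq_add, ← add_smul]; norm_num
  let U := {y | y - (x - w) ∈ P ∧ x - y ∈ P}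
  have hUP : U ⊆ P := fun y hy => hP.isUpperSet (sub_le_self y (sub_nonneg.2 hwx)) hy.1
  have hUopen : IsOpen U := (hP.isOpen.preimage (by fun_prop)).inter
    (hP.isOpen.preimage (by fun_prop))
  have hUne : U.Nonempty := by
    refine ⟨x - (2⁻¹ : ℝ) • w, ?_, ?_⟩
    · rwa [sub_sub_sub_cancel_left, hsplit]
    · rwa [sub_sub_cancel]
  refine ne_bot_of_le_ne_bot (hμ U hUP hUopen hUne) (measure_mono fun y hy => ⟨?_, hy.2⟩)
  exact sub_le_comm.1 (sub_nonneg.1 (hP.nonneg _ hy.1))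

lemma IsOpenUpperCone.measure_Iic_ne_zero [IsTopologicalAddGroup E] (hP : IsOpenUpperCone P)
    (hμ : ∀ U ⊆ P, IsOpen U → U.Nonempty → μ U ≠ 0) (hw : w ∈ P) : μ (Iic w) ≠ 0 :=
  ne_bot_of_le_ne_bot (hP.measure_sub_le_ne_zero hμ hw le_rfl)
    (measure_mono fun _ hy => sub_nonneg.1 (hP.nonneg _ hy.2))

variable [OrderClosedTopology E] [OpensMeasurableSpace E] [MeasurableAdd₂ E]

lemma IsOpenUpperCone.convPow_Iic_ne_zero [SFinite μ] (hP : IsOpenUpperCone P)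
    (hμ : ∀ z ∈ P, μ (Iic z) ≠ 0) {m : ℕ} (hm : m ≠ 0) (hw : w ∈ P) :
    convPow μ m (Iic w) ≠ 0 := by
  have hm_pos : (0 : ℝ) < m := by positivity
  have hroot : m • (m : ℝ)⁻¹ • w = w := by
    rw [← Nat.cast_smul_eq_nsmul ℝ, smul_inv_smul₀ hm_pos.ne']
  have hle := pow_measure_Iic_le_convPow μ ((m : ℝ)⁻¹ • w) m
  rw [hroot] at hle
  exact ne_bot_of_le_ne_bot (pow_ne_zero m (hμ _ (hP.smul_mem _ (inv_pos.2 hm_pos) _ hw))) hle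

theorem cdfRatio_pow_mul_convPow_lt [IsTopologicalAddGroup E] [IsFiniteMeasure μ]
    [IsFiniteMeasure ν] (hP : IsOpenUpperCone P)
    (hμP : ∀ᵐ y ∂μ, y ∈ P) (hνP : ∀ᵐ y ∂ν, y ∈ P)
    (hμ : ∀ U ⊆ P, IsOpen U → U.Nonempty → μ U ≠ 0) (hν : ∀ z ∈ P, ν (Iic z) ≠ 0)
    (hr : AntitoneOn (cdfRatio μ ν) P) (hw : w ∈ P) (hwx : w ≤ x)
    (hne : cdfRatio μ ν w ≠ cdfRatio μ ν x) {m : ℕ} (hm : 2 ≤ m) :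
    cdfRatio μ ν x ^ m * (convPow ν m).real (Iic x) < (convPow μ m).real (Iic x) := by
  obtain ⟨m, rfl⟩ := Nat.exists_eq_add_of_le' hm
  have hx : x ∈ P := hP.isUpperSet hwx hw
  have hr0 : 0 ≤ cdfRatio μ ν x := by unfold cdfRatio; positivity
  have hlt : cdfRatio μ ν x < cdfRatio μ ν w := (hr hw hx hwx).lt_of_ne' hne
  have hfreq : ∃ᵐ y ∂μ, x - y ≤ w ∧ convPow ν (m + 1) (Iic (x - y)) ≠ 0 :=
    (frequently_ae_iff.2 (hP.measure_sub_le_ne_zero hμ hw hwx)).mono fun y hy =>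
      ⟨hy.1, hP.convPow_Iic_ne_zero hν m.succ_ne_zero hy.2⟩
  have hlt_convPow := pow_mul_convPow_Iic_lt
    ((ENNReal.ofReal_lt_ofReal_iff_of_nonneg hr0).2 hlt)
    (cdfLEBelow_of_antitoneOn_cdfRatio hP.isUpperSet hνP hr hx)
    (cdfLEBelow_of_antitoneOn_cdfRatio hP.isUpperSet hνP hr hw)
    (hμP.mono hP.nonneg) (hνP.mono hP.nonneg) m.succ_ne_zero hfreq
  have hreal := ENNReal.toReal_strict_mono (measure_ne_top _ _) hlt_convPow
  rwa [ENNReal.toReal_mul, ENNReal.toReal_pow, ENNReal.toReal_ofReal hr0] at hreal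

end OpenUpperCone

section Density

/-- The measure with density `g` with respect to the ambient volume; negative values of `g` are
replaced by `0`. -/
noncomputable def densityMeasure {E : Type*} [MeasureSpace E] (g : E → ℝ) : Measure E :=
  volume.withDensity fun y => ENNReal.ofReal (g y)

lemma densityMeasure_comp_swap {E₁ E₂ : Type*} [MeasureSpace E₁] [MeasureSpace E₂]
    [SFinite (volume : Measure E₁)] [SFinite (volume : Measure E₂)] (f : E₁ × E₂ → ℝ) :
    densityMeasure (f ∘ Prod.swap) = (densityMeasure f).map Prod.swap := by
  ext s hs
  rw [Measure.map_apply measurable_swap hs, densityMeasure, densityMeasure,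
    withDensity_apply _ hs, withDensity_apply _ (measurable_swap hs)]
  exact (Measure.measurePreserving_swap (μ := (volume : Measure E₂))
    (ν := (volume : Measure E₁))).setLIntegral_comp_preimage_emb
      MeasurableEquiv.prodComm.measurableEmbedding (fun p => ENNReal.ofReal (f p))
      (Prod.swap ⁻¹' s)

/-- A nonnegative integrable function vanishing outside `P`, that is, the density of a finite
measure concentrated on `P`. -/
structure IsDensityOn {E : Type*} [MeasureSpace E] (P : Set E) (g : E → ℝ) : Prop where
  integrable : Integrable g
  nonneg : ∀ y, 0 ≤ g y
  eq_zero : ∀ y ∉ P, g y = 0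

namespace IsDensityOn

section Basic

variable {E : Type*} [MeasureSpace E] {P : Set E} {g : E → ℝ}

lemma isFiniteMeasure (hg : IsDensityOn P g) : IsFiniteMeasure (densityMeasure g) :=
  isFiniteMeasure_withDensity_ofReal hg.integrable.2

lemma ae_mem (hg : IsDensityOn P g) : ∀ᵐ y ∂densityMeasure g, y ∈ P := by
  refine (ae_withDensity_iff' hg.integrable.aemeasurable.ennreal_ofReal).2 (.of_forall fun y => ?_)
  contrapose!
  exact fun hy => by rw [hg.eq_zero y hy, ENNReal.ofReal_zero]

lemma integral_densityMeasure (hg : IsDensityOn P g) (φ : E → ℝ) :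
    ∫ y, φ y ∂densityMeasure g = ∫ y, φ y * g y := by
  rw [densityMeasure, integral_withDensity_eq_integral_toReal_smul₀
    hg.integrable.aemeasurable.ennreal_ofReal (.of_forall fun _ => ENNReal.ofReal_lt_top)]
  exact integral_congr_ae (.of_forall fun y => by
    simp only [ENNReal.toReal_ofReal (hg.nonneg y), smul_eq_mul, mul_comm])

lemma densityMeasure_real_apply (hg : IsDensityOn P g) {s : Set E} (hs : MeasurableSet s) :
    (densityMeasure g).real s = ∫ y in s, g y := by
  rw [measureReal_def, densityMeasure, withDensity_apply _ hs,
    ← ofReal_integral_eq_lintegral_ofReal hg.integrable.integrableOn (.of_forall hg.nonneg),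
    ENNReal.toReal_ofReal (integral_nonneg hg.nonneg)]

lemma setIntegral_inter (hg : IsDensityOn P g) {s : Set E} (hs : MeasurableSet s) (φ : E → ℝ) :
    ∫ y in P ∩ s, φ y * g y = ∫ y in s, φ y * g y := by
  refine (setIntegral_eq_of_subset_of_forall_sdiff_eq_zero hs inter_subset_right
    fun y hy => ?_).symm
  rw [hg.eq_zero y fun h => hy.2 ⟨h, hy.1⟩, mul_zero]

lemma isProbabilityMeasure (hg : IsDensityOn P g) (hg_one : ∫ y, g y = 1) :
    IsProbabilityMeasure (densityMeasure g) := by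
  rw [isProbabilityMeasure_iff_real, hg.densityMeasure_real_apply .univ, setIntegral_univ, hg_one]

lemma densityMeasure_ne_zero_of_isOpen [TopologicalSpace E] [(volume : Measure E).IsOpenPosMeasure]
    (hg : IsDensityOn P g) (hpos : ∀ y ∈ P, 0 < g y) {U : Set E} (hUP : U ⊆ P) (hU : IsOpen U)
    (hne : U.Nonempty) : densityMeasure g U ≠ 0 := by
  rw [densityMeasure, Ne, withDensity_apply_eq_zero' hg.integrable.aemeasurable.ennreal_ofReal]
  exact ne_bot_of_le_ne_bot (hU.measure_ne_zero volume hne)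
    (measure_mono fun y hy => ⟨(ENNReal.ofReal_pos.2 (hpos y (hUP hy))).ne', hy⟩)

end Basic

section Marginal

variable {E₁ E₂ : Type*} [MeasureSpace E₁] [MeasureSpace E₂] [SFinite (volume : Measure E₂)]
  {P₁ : Set E₁} {P₂ : Set E₂} {f : E₁ × E₂ → ℝ}

lemma fst (hf : IsDensityOn (P₁ ×ˢ P₂) f) : IsDensityOn P₁ fun x => ∫ y, f (x, y) where
  integrable := hf.integrable.integral_prod_left
  nonneg _ := integral_nonneg fun _ => hf.nonneg _
  eq_zero _ hx := integral_eq_zero_of_ae (.of_forall fun _ => hf.eq_zero _ fun h => hx h.1)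

variable [SFinite (volume : Measure E₁)]

lemma densityMeasure_fst (hf : IsDensityOn (P₁ ×ˢ P₂) f) :
    densityMeasure (fun x => ∫ y, f (x, y)) = (densityMeasure f).fst := by
  have hmeas := hf.integrable.aemeasurable.ennreal_ofReal
  ext s hs
  rw [Measure.fst_apply hs, ← prod_univ, densityMeasure, densityMeasure,
    withDensity_apply _ hs, withDensity_apply _ (hs.prod .univ), Measure.volume_eq_prod,
    ← Measure.prod_restrict, Measure.restrict_univ,
    lintegral_prod _ (hmeas.mono_measure (Measure.prod_mono Measure.restrict_le_self le_rfl))]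
  refine lintegral_congr_ae ?_
  filter_upwards [ae_restrict_of_ae hf.integrable.prod_right_ae] with x hx
    using ofReal_integral_eq_lintegral_ofReal hx (.of_forall fun _ => hf.nonneg _)

lemma comp_swap (hf : IsDensityOn (P₁ ×ˢ P₂) f) : IsDensityOn (P₂ ×ˢ P₁) (f ∘ Prod.swap) where
  integrable := hf.integrable.swap
  nonneg _ := hf.nonneg _
  eq_zero _ hy := hf.eq_zero _ fun h => hy h.symm

lemma snd (hf : IsDensityOn (P₁ ×ˢ P₂) f) : IsDensityOn P₂ fun y => ∫ x, f (x, y) :=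
  hf.comp_swap.fst

lemma densityMeasure_snd (hf : IsDensityOn (P₁ ×ˢ P₂) f) :
    densityMeasure (fun y => ∫ x, f (x, y)) = (densityMeasure f).snd := by
  rw [← Measure.fst_map_swap, ← densityMeasure_comp_swap]
  exact hf.comp_swap.densityMeasure_fst

end Marginal

end IsDensityOn

end Density

section ConvPowCDF

section Single

variable {E : Type*} [AddCommGroup E] [PartialOrder E] [MeasureSpace E] {P : Set E} {g : E → ℝ}
  {G : ℕ → E → ℝ}

/-- `G m`, for `m ≥ 1`, is the `m`-fold convolution of the cumulative distribution function with
density `g` concentrated on `P`, given by the usual recursion. There is no condition on `G 0`. -/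
structure IsConvPowCDF (P : Set E) (g : E → ℝ) (G : ℕ → E → ℝ) : Prop where
  one : ∀ x, G 1 x = ∫ y in P ∩ Iic x, g y
  succ : ∀ m, 1 ≤ m → ∀ x, G (m + 1) x = ∫ y in P ∩ Iic x, G m (x - y) * g y

variable [IsOrderedAddMonoid E] [TopologicalSpace E] [OrderClosedTopology E]
  [OpensMeasurableSpace E] [MeasurableAdd₂ E]

lemma measureReal_conv_Iic (μ ν : Measure E) [IsFiniteMeasure μ] [SFinite ν] (x : E) :
    (μ ∗ ν).real (Iic x) = ∫ y, μ.real (Iic (x - y)) ∂ν := by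
  rw [measureReal_def, conv_Iic]
  exact (integral_toReal (measurable_measure_Iic_sub μ x).aemeasurable
    (.of_forall fun _ => measure_lt_top _ _)).symm

lemma IsConvPowCDF.eq_convPow (hG : IsConvPowCDF P g G) (hP : ∀ w ∈ P, 0 ≤ w)
    (hg : IsDensityOn P g) {m : ℕ} (hm : 1 ≤ m) (x : E) :
    G m x = (convPow (densityMeasure g) m).real (Iic x) := by
  have := hg.isFiniteMeasure
  have hnonneg := ae_nonneg_convPow (hg.ae_mem.mono hP)
  induction m, hm using Nat.le_induction generalizing x with
  | base =>
    rw [hG.one, convPow_one, hg.densityMeasure_real_apply measurableSet_Iic]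
    simpa only [one_mul] using hg.setIntegral_inter measurableSet_Iic fun _ => 1
  | succ m hm ih =>
    have hzero (y : E) (hy : y ∉ Iic x) :
        (convPow (densityMeasure g) m).real (Iic (x - y)) = 0 :=
      (measureReal_eq_zero_iff).2 (measure_Iic_eq_zero_of_notMem (isUpperSet_Ici 0)
        (hnonneg m) fun h => hy (sub_nonneg.1 h))
    rw [hG.succ m hm, hg.setIntegral_inter measurableSet_Iic fun y => G m (x - y), convPow,
      measureReal_conv_Iic, hg.integral_densityMeasure]
    simp_rw [ih]
    exact setIntegral_eq_integral_of_forall_compl_eq_zero fun y hy => by rw [hzero y hy, zero_mul]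

end Single

variable {E₁ E₂ : Type*}
  [AddCommGroup E₁] [PartialOrder E₁] [IsOrderedAddMonoid E₁] [TopologicalSpace E₁]
  [IsTopologicalAddGroup E₁] [OrderClosedTopology E₁] [SecondCountableTopology E₁]
  [MeasureSpace E₁] [BorelSpace E₁] [SFinite (volume : Measure E₁)]
  [AddCommGroup E₂] [PartialOrder E₂] [IsOrderedAddMonoid E₂] [TopologicalSpace E₂]
  [IsTopologicalAddGroup E₂] [OrderClosedTopology E₂] [SecondCountableTopology E₂]
  [MeasureSpace E₂] [BorelSpace E₂] [SFinite (volume : Measure E₂)]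
  {P₁ : Set E₁} {P₂ : Set E₂} {f : E₁ × E₂ → ℝ} {f₁ : E₁ → ℝ} {f₂ : E₂ → ℝ}
  {Fc : ℕ → E₁ × E₂ → ℝ} {F₁c : ℕ → E₁ → ℝ} {F₂c : ℕ → E₂ → ℝ}

lemma IsConvPowCDF.mul_eq_convPow_prod (hf : IsDensityOn (P₁ ×ˢ P₂) f)
    (hP₁ : ∀ w ∈ P₁, 0 ≤ w) (hP₂ : ∀ w ∈ P₂, 0 ≤ w)
    (hf₁ : ∀ x₁, f₁ x₁ = ∫ y₂, f (x₁, y₂)) (hf₂ : ∀ x₂, f₂ x₂ = ∫ y₁, f (y₁, x₂))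
    (hF₁c : IsConvPowCDF P₁ f₁ F₁c) (hF₂c : IsConvPowCDF P₂ f₂ F₂c)
    {m : ℕ} (hm : 1 ≤ m) (x : E₁ × E₂) :
    F₁c m x.1 * F₂c m x.2 =
      (convPow ((densityMeasure f).fst.prod (densityMeasure f).snd) m).real (Iic x) := by
  have := hf.isFiniteMeasure
  obtain rfl := funext hf₁
  obtain rfl := funext hf₂
  rw [hF₁c.eq_convPow hP₁ hf.fst hm, hF₂c.eq_convPow hP₂ hf.snd hm, hf.densityMeasure_fst,
    hf.densityMeasure_snd, convPow_prod, ← measureReal_prod_prod]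
  rfl

lemma IsConvPowCDF.div_mul_eq_cdfRatio (hf : IsDensityOn (P₁ ×ˢ P₂) f)
    (hP₁ : ∀ w ∈ P₁, 0 ≤ w) (hP₂ : ∀ w ∈ P₂, 0 ≤ w)
    (hf₁ : ∀ x₁, f₁ x₁ = ∫ y₂, f (x₁, y₂)) (hf₂ : ∀ x₂, f₂ x₂ = ∫ y₁, f (y₁, x₂))
    (hFc : IsConvPowCDF (P₁ ×ˢ P₂) f Fc) (hF₁c : IsConvPowCDF P₁ f₁ F₁c)
    (hF₂c : IsConvPowCDF P₂ f₂ F₂c) (x : E₁ × E₂) :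
    Fc 1 x / (F₁c 1 x.1 * F₂c 1 x.2) =
      cdfRatio (densityMeasure f) ((densityMeasure f).fst.prod (densityMeasure f).snd) x := by
  have := hf.isFiniteMeasure
  rw [mul_eq_convPow_prod hf hP₁ hP₂ hf₁ hf₂ hF₁c hF₂c le_rfl,
    hFc.eq_convPow (fun w hw => ⟨hP₁ _ hw.1, hP₂ _ hw.2⟩) hf le_rfl, convPow_one, convPow_one,
    cdfRatio]

lemma IsConvPowCDF.nontrivial_of_one_lt (hf : IsDensityOn (P₁ ×ˢ P₂) f) (hf_one : ∫ y, f y = 1)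
    (hP₁ : ∀ w ∈ P₁, 0 ≤ w) (hP₂ : ∀ w ∈ P₂, 0 ≤ w)
    (hf₁ : ∀ x₁, f₁ x₁ = ∫ y₂, f (x₁, y₂)) (hf₂ : ∀ x₂, f₂ x₂ = ∫ y₁, f (y₁, x₂))
    (hFc : IsConvPowCDF (P₁ ×ˢ P₂) f Fc) (hF₁c : IsConvPowCDF P₁ f₁ F₁c)
    (hF₂c : IsConvPowCDF P₂ f₂ F₂c) {x : E₁ × E₂}
    (hx : 1 < Fc 1 x / (F₁c 1 x.1 * F₂c 1 x.2)) : Nontrivial E₁ ∧ Nontrivial E₂ := by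
  have := hf.isProbabilityMeasure hf_one
  rw [div_mul_eq_cdfRatio hf hP₁ hP₂ hf₁ hf₂ hFc hF₁c hF₂c] at hx
  refine ⟨not_subsingleton_iff_nontrivial.1 fun _ => hx.not_ge ?_,
    not_subsingleton_iff_nontrivial.1 fun _ => hx.not_ge ?_⟩
  · exact cdfRatio_fst_prod_snd_le_one_of_subsingleton_fst measurableSet_Iic
  · exact cdfRatio_fst_prod_snd_le_one_of_subsingleton_snd measurableSet_Iic

variable [Module ℝ E₁] [Module ℝ E₂] [(volume : Measure E₁).IsOpenPosMeasure]
  [(volume : Measure E₂).IsOpenPosMeasure]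

theorem convolution_inequality_general
    (hP₁ : IsOpenUpperCone P₁) (hP₂ : IsOpenUpperCone P₂)
    (hf : IsDensityOn (P₁ ×ˢ P₂) f) (hpos : ∀ y ∈ P₁ ×ˢ P₂, 0 < f y)
    (hf₁ : ∀ x₁, f₁ x₁ = ∫ y₂, f (x₁, y₂)) (hf₂ : ∀ x₂, f₂ x₂ = ∫ y₁, f (y₁, x₂))
    (hFc : IsConvPowCDF (P₁ ×ˢ P₂) f Fc) (hF₁c : IsConvPowCDF P₁ f₁ F₁c)
    (hF₂c : IsConvPowCDF P₂ f₂ F₂c)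
    (hanti : AntitoneOn (fun x => Fc 1 x / (F₁c 1 x.1 * F₂c 1 x.2)) (P₁ ×ˢ P₂))
    {w x : E₁ × E₂} (hw : w ∈ P₁ ×ˢ P₂) (hwx : w ≤ x)
    (hne : Fc 1 w / (F₁c 1 w.1 * F₂c 1 w.2) ≠ Fc 1 x / (F₁c 1 x.1 * F₂c 1 x.2))
    {m : ℕ} (hm : 2 ≤ m) :
    (Fc 1 x / (F₁c 1 x.1 * F₂c 1 x.2)) ^ m * (F₁c m x.1 * F₂c m x.2) < Fc m x := by
  have := hf.isFiniteMeasure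
  have hP := hP₁.prod hP₂
  have hm1 : 1 ≤ m := one_le_two.trans hm
  have hopen : ∀ U ⊆ P₁ ×ˢ P₂, IsOpen U → U.Nonempty → densityMeasure f U ≠ 0 :=
    fun _ => hf.densityMeasure_ne_zero_of_isOpen hpos
  have hprodP : ∀ᵐ y ∂(densityMeasure f).fst.prod (densityMeasure f).snd, y ∈ P₁ ×ˢ P₂ := by
    rw [← hf.densityMeasure_fst, ← hf.densityMeasure_snd]
    exact (Measure.quasiMeasurePreserving_fst.ae hf.fst.ae_mem).and
      (Measure.quasiMeasurePreserving_snd.ae hf.snd.ae_mem)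
  have hprod0 (z) (hz : z ∈ P₁ ×ˢ P₂) :
      (densityMeasure f).fst.prod (densityMeasure f).snd (Iic z) ≠ 0 :=
    measure_fst_prod_snd_Iic_ne_zero measurableSet_Iic measurableSet_Iic
      (hP.measure_Iic_ne_zero hopen hz)
  rw [IsConvPowCDF.mul_eq_convPow_prod hf hP₁.nonneg hP₂.nonneg hf₁ hf₂ hF₁c hF₂c hm1,
    hFc.eq_convPow hP.nonneg hf hm1]
  simp only [IsConvPowCDF.div_mul_eq_cdfRatio hf hP₁.nonneg hP₂.nonneg hf₁ hf₂ hFc hF₁c hF₂c]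
    at hanti hne ⊢
  exact cdfRatio_pow_mul_convPow_lt hP hf.ae_mem hprodP hopen hprod0 hanti hw hwx hne hm

end ConvPowCDF

section PosOrthant

/-- The open positive orthant. -/
def posOrthant (ι : Type*) : Set (ι → ℝ) := {x | ∀ i, 0 < x i}

variable {ι κ : Type*}

lemma isOpenUpperCone_posOrthant [Finite ι] : IsOpenUpperCone (posOrthant ι) where
  isOpen := by
    simpa only [posOrthant, ofPred_forall] using
      isOpen_iInter_of_finite fun i => isOpen_lt continuous_const (continuous_apply i)
  isUpperSet _ _ hxy hx i := (hx i).trans_le (hxy i)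
  nonneg _ hx i := (hx i).le
  smul_mem _ hc _ hx i := mul_pos hc (hx i)

lemma setOf_pos_and_le_eq_posOrthant_inter_Iic (x : ι → ℝ) :
    {y : ι → ℝ | ∀ i, 0 < y i ∧ y i ≤ x i} = posOrthant ι ∩ Iic x :=
  ext fun _ => forall_and

lemma setOf_prod_pos_and_le_eq_posOrthant_inter_Iic (x : (ι → ℝ) × (κ → ℝ)) :
    {y : (ι → ℝ) × (κ → ℝ) |
      (∀ i, 0 < y.1 i ∧ y.1 i ≤ x.1 i) ∧ (∀ j, 0 < y.2 j ∧ y.2 j ≤ x.2 j)} =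
      posOrthant ι ×ˢ posOrthant κ ∩ Iic x := by
  ext y
  simp only [mem_ofPred_eq, forall_and]
  exact and_and_and_comm

lemma nonempty_of_nontrivial_pi [Nontrivial (ι → ℝ)] : Nonempty ι :=
  not_isEmpty_iff.1 fun _ => not_subsingleton (ι → ℝ) inferInstance

lemma update_mem_posOrthant [DecidableEq ι] {x : ι → ℝ} (hx : x ∈ posOrthant ι) (i : ι) {t : ℝ}
    (ht : 0 < t) : Function.update x i t ∈ posOrthant ι :=
  (Function.forall_update_iff x fun _ s => 0 < s).2 ⟨ht, fun j _ => hx j⟩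

lemma deriv_deriv_eq_zero_of_eventually_eq_add {g : ℝ → ℝ → ℝ} {u v : ℝ → ℝ} {s₀ t₀ : ℝ}
    (h : ∀ᶠ s in nhds s₀, ∀ᶠ t in nhds t₀, g t s = u t + v s) :
    deriv (fun s => deriv (fun t => g t s) t₀) s₀ = 0 := by
  have hinner : (fun s => deriv (fun t => g t s) t₀) =ᶠ[nhds s₀] fun _ => deriv u t₀ :=
    h.mono fun s hs => (EventuallyEq.deriv_eq hs).trans (deriv_add_const _)
  rw [hinner.deriv_eq, deriv_const]

theorem exists_div_mul_ne_of_mixed_deriv_ne_zero [DecidableEq ι] [DecidableEq κ]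
    {F : (ι → ℝ) × (κ → ℝ) → ℝ} {F₁ : (ι → ℝ) → ℝ} {F₂ : (κ → ℝ) → ℝ}
    (hr : ∀ w ∈ posOrthant ι ×ˢ posOrthant κ, F w / (F₁ w.1 * F₂ w.2) ≠ 0) {i : ι} {j : κ}
    (hd : ∀ w ∈ posOrthant ι ×ˢ posOrthant κ,
      deriv (fun s => deriv (fun t => Real.log
        (F (Function.update w.1 i t, Function.update w.2 j s))) (w.1 i)) (w.2 j) ≠ 0)
    {x : (ι → ℝ) × (κ → ℝ)} (hx : x ∈ posOrthant ι ×ˢ posOrthant κ) :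
    ∃ w ∈ posOrthant ι ×ˢ posOrthant κ, w ≤ x ∧
      F w / (F₁ w.1 * F₂ w.2) ≠ F x / (F₁ x.1 * F₂ x.2) := by
  by_contra! hconst
  let p : (ι → ℝ) × (κ → ℝ) := (fun i => x.1 i / 2, fun j => x.2 j / 2)
  have hp : p ∈ posOrthant ι ×ˢ posOrthant κ :=
    ⟨fun i => half_pos (hx.1 i), fun j => half_pos (hx.2 j)⟩
  refine hd p hp (deriv_deriv_eq_zero_of_eventually_eq_add
    (u := fun t => Real.log (F x / (F₁ x.1 * F₂ x.2)) +
      Real.log (F₁ (Function.update p.1 i t)))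
    (v := fun s => Real.log (F₂ (Function.update p.2 j s))) ?_)
  filter_upwards [Ioo_mem_nhds (hp.2 j) (half_lt_self (hx.2 j))] with s hs
  filter_upwards [Ioo_mem_nhds (hp.1 i) (half_lt_self (hx.1 i))] with t ht
  let w : (ι → ℝ) × (κ → ℝ) := (Function.update p.1 i t, Function.update p.2 j s)
  have hw : w ∈ posOrthant ι ×ˢ posOrthant κ :=
    ⟨update_mem_posOrthant hp.1 i ht.1, update_mem_posOrthant hp.2 j hs.1⟩
  have hwx : w ≤ x :=
    ⟨update_le_iff.2 ⟨ht.2.le, fun a _ => (half_lt_self (hx.1 a)).le⟩,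
      update_le_iff.2 ⟨hs.2.le, fun b _ => (half_lt_self (hx.2 b)).le⟩⟩
  obtain ⟨-, hF₁₂⟩ := div_ne_zero_iff.1 (hr w hw)
  obtain ⟨hF₁, hF₂⟩ := mul_ne_zero_iff.1 hF₁₂
  calc Real.log (F w) = Real.log (F x / (F₁ x.1 * F₂ x.2) * (F₁ w.1 * F₂ w.2)) := by
        rw [← hconst w hw hwx, div_mul_cancel₀ _ hF₁₂]
    _ = _ := by
        rw [Real.log_mul (hr x hx) hF₁₂, Real.log_mul hF₁ hF₂, add_assoc]

end PosOrthant

theorem convolution_inequality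
    (k l : ℕ)
    (f F : (Fin k → ℝ) × (Fin l → ℝ) → ℝ)
    (f₁ : (Fin k → ℝ) → ℝ) (F₁ : (Fin k → ℝ) → ℝ)
    (f₂ : (Fin l → ℝ) → ℝ) (F₂ : (Fin l → ℝ) → ℝ)
    -- f is a probability density, positive exactly on the positive orthant
    (hfpos : ∀ y : (Fin k → ℝ) × (Fin l → ℝ),
      (∀ i, 0 < y.1 i) → (∀ j, 0 < y.2 j) → 0 < f y)
    (hfsupp : ∀ y : (Fin k → ℝ) × (Fin l → ℝ),
      ¬ ((∀ i, 0 < y.1 i) ∧ (∀ j, 0 < y.2 j)) → f y = 0)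
    (hfint : ∫ y, f y = 1)
    -- F is the cdf of f, and f₁, F₁, f₂, F₂ the marginal densities and cdfs
    (hF : ∀ x : (Fin k → ℝ) × (Fin l → ℝ),
      F x = ∫ y in {y : (Fin k → ℝ) × (Fin l → ℝ) |
              (∀ i, 0 < y.1 i ∧ y.1 i ≤ x.1 i) ∧ (∀ j, 0 < y.2 j ∧ y.2 j ≤ x.2 j)}, f y)
    (hf₁ : ∀ x₁ : Fin k → ℝ, f₁ x₁ = ∫ y₂ : Fin l → ℝ, f (x₁, y₂))
    (hf₂ : ∀ x₂ : Fin l → ℝ, f₂ x₂ = ∫ y₁ : Fin k → ℝ, f (y₁, x₂))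
    (hF₁ : ∀ x₁ : Fin k → ℝ,
      F₁ x₁ = ∫ z₁ in {z₁ : Fin k → ℝ | ∀ i, 0 < z₁ i ∧ z₁ i ≤ x₁ i}, f₁ z₁)
    (hF₂ : ∀ x₂ : Fin l → ℝ,
      F₂ x₂ = ∫ z₂ in {z₂ : Fin l → ℝ | ∀ j, 0 < z₂ j ∧ z₂ j ≤ x₂ j}, f₂ z₂)
    -- F is C² and strictly MTP₂ on the positive orthant
    (hC2 : ContDiffOn ℝ 2 F {x | (∀ i, 0 < x.1 i) ∧ (∀ j, 0 < x.2 j)})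
    (hMTP2 : ∀ x : (Fin k → ℝ) × (Fin l → ℝ),
      (∀ i, 0 < x.1 i) → (∀ j, 0 < x.2 j) →
      ∀ c d : Fin k ⊕ Fin l, c ≠ d →
      0 < deriv (fun s => deriv
            (fun t => Real.log (F (updCoord (updCoord x d s) c t)))
            (coordVal x c)) (coordVal x d))
    -- the ratio r is > 1 and coordinatewise decreasing on the positive orthant
    (hr1 : ∀ x : (Fin k → ℝ) × (Fin l → ℝ),
      (∀ i, 0 < x.1 i) → (∀ j, 0 < x.2 j) → 1 < F x / (F₁ x.1 * F₂ x.2))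
    (hrdec : ∀ x y : (Fin k → ℝ) × (Fin l → ℝ),
      (∀ i, 0 < x.1 i) → (∀ j, 0 < x.2 j) →
      (∀ i, x.1 i ≤ y.1 i) → (∀ j, x.2 j ≤ y.2 j) →
      F y / (F₁ y.1 * F₂ y.2) ≤ F x / (F₁ x.1 * F₂ x.2))
    -- the m-fold convolutions of F and of its marginals
    (Fc : ℕ → (Fin k → ℝ) × (Fin l → ℝ) → ℝ)
    (F₁c : ℕ → (Fin k → ℝ) → ℝ) (F₂c : ℕ → (Fin l → ℝ) → ℝ)
    (hFc1 : Fc 1 = F) (hF₁c1 : F₁c 1 = F₁) (hF₂c1 : F₂c 1 = F₂)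
    (hFcrec : ∀ m : ℕ, 1 ≤ m → ∀ x : (Fin k → ℝ) × (Fin l → ℝ),
      Fc (m + 1) x = ∫ y in {y : (Fin k → ℝ) × (Fin l → ℝ) |
          (∀ i, 0 < y.1 i ∧ y.1 i ≤ x.1 i) ∧ (∀ j, 0 < y.2 j ∧ y.2 j ≤ x.2 j)},
        Fc m (x - y) * f y)
    (hF₁crec : ∀ m : ℕ, 1 ≤ m → ∀ x₁ : Fin k → ℝ,
      F₁c (m + 1) x₁ = ∫ y₁ in {y₁ : Fin k → ℝ | ∀ i, 0 < y₁ i ∧ y₁ i ≤ x₁ i},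
        F₁c m (x₁ - y₁) * f₁ y₁)
    (hF₂crec : ∀ m : ℕ, 1 ≤ m → ∀ x₂ : Fin l → ℝ,
      F₂c (m + 1) x₂ = ∫ y₂ in {y₂ : Fin l → ℝ | ∀ j, 0 < y₂ j ∧ y₂ j ≤ x₂ j},
        F₂c m (x₂ - y₂) * f₂ y₂) :
    ∀ m : ℕ, 2 ≤ m → ∀ x : (Fin k → ℝ) × (Fin l → ℝ),
      (∀ i, 0 < x.1 i) → (∀ j, 0 < x.2 j) →
      Fc m x > (F x / (F₁ x.1 * F₂ x.2)) ^ m * (F₁c m x.1 * F₂c m x.2) := by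
  subst hFc1 hF₁c1 hF₂c1
  simp only [setOf_prod_pos_and_le_eq_posOrthant_inter_Iic] at hF hFcrec
  simp only [setOf_pos_and_le_eq_posOrthant_inter_Iic] at hF₁ hF₂ hF₁crec hF₂crec
  intro m hm x hx₁ hx₂
  have hP₁ := isOpenUpperCone_posOrthant (ι := Fin k)
  have hP₂ := isOpenUpperCone_posOrthant (ι := Fin l)
  have hf : IsDensityOn (posOrthant (Fin k) ×ˢ posOrthant (Fin l)) f :=
    { integrable := integrable_of_integral_eq_one hfint
      nonneg y := (em _).elim (fun hy => (hfpos y hy.1 hy.2).le) fun hy => (hfsupp y hy).ge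
      eq_zero := hfsupp }
  have hFc : IsConvPowCDF _ f Fc := ⟨hF, hFcrec⟩
  have hF₁c : IsConvPowCDF _ f₁ F₁c := ⟨hF₁, hF₁crec⟩
  have hF₂c : IsConvPowCDF _ f₂ F₂c := ⟨hF₂, hF₂crec⟩
  obtain ⟨_, _⟩ := IsConvPowCDF.nontrivial_of_one_lt hf hfint hP₁.nonneg hP₂.nonneg hf₁ hf₂
    hFc hF₁c hF₂c (hr1 x hx₁ hx₂)
  obtain ⟨i⟩ := nonempty_of_nontrivial_pi (ι := Fin k)
  obtain ⟨j⟩ := nonempty_of_nontrivial_pi (ι := Fin l)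
  obtain ⟨w, hw, hwx, hne⟩ := exists_div_mul_ne_of_mixed_deriv_ne_zero (i := i) (j := j)
    (fun w hw => (zero_lt_one.trans (hr1 w hw.1 hw.2)).ne')
    (fun w hw => (hMTP2 w hw.1 hw.2 (.inl i) (.inr j) Sum.inl_ne_inr).ne') ⟨hx₁, hx₂⟩
  exact convolution_inequality_general hP₁ hP₂ hf (fun y hy => hfpos y hy.1 hy.2) hf₁ hf₂
    hFc hF₁c hF₂c (fun _ hy _ _ hyz => hrdec _ _ hy.1 hy.2 hyz.1 hyz.2) hw hwx hne hm
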